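/- Let n ≥ 5, let f be a γ_R-function of the generalized Petersen graph P(n,2) with minimum cardinality of V₂, and let i be an integer. If r_f(V′(i−7,7)) = 1/2 and r_f(V′(i+7,7)) = 1/2, then r_f(V′(i,7)) ≥ 2 (indices modulo n). -/

import Mathlib

/-!
Every vertex `w` has excess `r_f(w) ≥ 0`, and `2 r_f(w)` is a natural number computed from the
values of `f` at `w` and its three neighbours, so a hypothesis `r_f(V') = 1/2` leaves very little
freedom on a block of seven columns. The global assumptions enter only through
`IsGammaRFun.not_adj_two_one` and `not_adj_two_two`: an edge joining a vertex of value `2` to a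
vertex of value `1` contradicts minimality of the weight (lower the `1` to `0`), and an edge joining
two vertices of value `2` contradicts minimality of `V₂` (replace one of the `2`s by `0` and its at
most two uncovered neighbours by `1`).

What remains is a finite problem on sequences of columns `(f(v_j), f(u_j))`. Reading columns from
left to right, `Forced m b C` runs through all continuations by `m` columns whose total (doubled)
excess is at most `b`. A block with excess at most `1` ends in one of six patterns of four columns
(`forced_endings`), and from none of these can one continue by a block of excess at most `3`
followed by a block of excess at most `1` (`endings_forced`). Hence the middle block has doubled
excess at least `4`.

The columns are read along the universal cover, so overlaps between the blocks do not matter once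
`n ≥ 7`. For `n = 5, 6` a block of seven columns is the whole graph; then `r_f = 1/2` would give a
periodic sequence of columns with doubled excess `1` per period, and there is none
(`not_periodic_five`, `not_periodic_six`).
-/

/-- The generalized Petersen graph `P(n,k)`: vertices `Sum.inl i` are the outer
vertices `v_i` and `Sum.inr i` are the inner vertices `u_i` (indices in `ZMod n`);
edges are `v_i v_{i+1}`, `v_i u_i` and `u_i u_{i+k}`. -/
def petersen (n k : ℕ) : SimpleGraph (ZMod n ⊕ ZMod n) :=
  SimpleGraph.fromRel fun a b =>
    match a, b with
    | Sum.inl i, Sum.inl j => j = i + 1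
    | Sum.inl i, Sum.inr j => j = i
    | Sum.inr i, Sum.inr j => j = i + (k : ZMod n)
    | _, _ => False

/-- `f` is a Roman domination function on `G`. -/
def IsRDF {V : Type*} (G : SimpleGraph V) (f : V → ℕ) : Prop :=
  (∀ v, f v ≤ 2) ∧ ∀ v, f v = 0 → ∃ u, G.Adj v u ∧ f u = 2

/-- The weight of a function on the vertices. -/
noncomputable def weight {V : Type*} (f : V → ℕ) : ℕ := ∑ᶠ v, f v

/-- The Roman domination number of `G`. -/
noncomputable def romanDomNum {V : Type*} (G : SimpleGraph V) : ℕ :=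
  sInf {w | ∃ f : V → ℕ, IsRDF G f ∧ weight f = w}

/-- `f` is a `γ_R`-function of `G`: an RDF of minimum weight. -/
def IsGammaRFun {V : Type*} (G : SimpleGraph V) (f : V → ℕ) : Prop :=
  IsRDF G f ∧ weight f = romanDomNum G

/-- `S` is a dominating set of `G`. -/
def IsDomSet {V : Type*} (G : SimpleGraph V) (S : Set V) : Prop :=
  ∀ v, v ∈ S ∨ ∃ u ∈ S, G.Adj u v

/-- The domination number of `G`. -/
noncomputable def domNum {V : Type*} (G : SimpleGraph V) : ℕ :=
  sInf {k | ∃ S : Set V, IsDomSet G S ∧ S.ncard = k}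

/-- The function `g_f` associated to an RDF `f` on `P(n,2)`. -/
noncomputable def gf (n : ℕ) (f : ZMod n ⊕ ZMod n → ℕ) (w : ZMod n ⊕ ZMod n) : ℚ :=
  if f w = 2 then 1/2
  else if f w = 1 then 1
  else (1/2) * (((petersen n 2).neighborSet w) ∩ {u | f u = 2}).ncard

/-- `r_f(S) = Σ_{w ∈ S} (g_f(w) - 1/2)`. -/
noncomputable def rfSum (n : ℕ) (f : ZMod n ⊕ ZMod n → ℕ) (S : Set (ZMod n ⊕ ZMod n)) : ℚ :=
  ∑ᶠ w ∈ S, (gf n f w - 1/2)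

/-- The block `V'(i,t) = {v_j, u_j : i ≤ j ≤ i+t-1}`, indices modulo `n`. -/
def Vblock (n : ℕ) (i : ℤ) (t : ℕ) : Set (ZMod n ⊕ ZMod n) :=
  {w | ∃ j : ℤ, i ≤ j ∧ j ≤ i + t - 1 ∧
    (w = Sum.inl ((j : ℤ) : ZMod n) ∨ w = Sum.inr ((j : ℤ) : ZMod n))}

/-- `f` has minimum cardinality of `V₂` among `γ_R`-functions of `P(n,2)`. -/
def MinV2 (n : ℕ) (f : ZMod n ⊕ ZMod n → ℕ) : Prop :=
  ∀ f' : ZMod n ⊕ ZMod n → ℕ, IsGammaRFun (petersen n 2) f' →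
    {v | f v = 2}.ncard ≤ {v | f' v = 2}.ncard

/-! ### Minimality of the weight and of `V₂` -/

section Minimality

variable {V : Type*} {G : SimpleGraph V} {f : V → ℕ}

lemma IsGammaRFun.weight_le (hf : IsGammaRFun G f) {f' : V → ℕ} (h : IsRDF G f') :
    weight f ≤ weight f' := by
  rw [hf.2]
  exact Nat.sInf_le ⟨f', h, rfl⟩

lemma IsGammaRFun.not_adj_two_one [Fintype V] (hf : IsGammaRFun G f) {u v : V} (huv : G.Adj u v)
    (hu : f u = 2) (hv : f v = 1) : False := by
  classical
  have hR : IsRDF G (Function.update f v 0) := by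
    refine ⟨fun w => ?_, fun w hw => ?_⟩
    · by_cases h : w = v
      · simp [h]
      · simpa [h] using hf.1.1 w
    · by_cases h : w = v
      · subst h
        exact ⟨u, huv.symm, by simp [huv.ne, hu]⟩
      · obtain ⟨z, hz, hz2⟩ := hf.1.2 w (by simpa [h] using hw)
        have : z ≠ v := by rintro rfl; omega
        exact ⟨z, hz, by simpa [this] using hz2⟩
  have hlt : weight (Function.update f v 0) < weight f := by
    simp only [weight, finsum_eq_sum_of_fintype]
    refine Finset.sum_lt_sum (fun w _ => ?_) ⟨v, Finset.mem_univ v, by simp [hv]⟩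
    by_cases h : w = v <;> simp [h]
  exact absurd (hf.weight_le hR) (not_le.mpr hlt)

/-- If `u` and `v` are adjacent of value `2` and `u` has at most two further neighbours `a`, `b`,
then giving `u` the value `0` and `a`, `b` at least the value `1` yields a Roman domination function
of no larger weight with fewer vertices of value `2`. -/
lemma IsGammaRFun.not_adj_two_two [Fintype V] (hf : IsGammaRFun G f)
    (hmin : ∀ f' : V → ℕ, IsGammaRFun G f' → {v | f v = 2}.ncard ≤ {v | f' v = 2}.ncard)
    {u v a b : V} (huv : G.Adj u v) (hN : ∀ w, G.Adj u w → w = v ∨ w = a ∨ w = b)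
    (hu : f u = 2) (hv : f v = 2) : False := by
  classical
  set f' : V → ℕ := fun w =>
    if w = u then 0 else if w = a ∨ w = b then max (f w) 1 else f w with hf'
  have hge : ∀ w, w ≠ u → f w ≤ f' w := by
    intro w hw
    simp only [hf', hw, if_false]
    split_ifs <;> omega
  have htwo : ∀ w, f' w = 2 ↔ w ≠ u ∧ f w = 2 := by
    intro w
    simp only [hf']
    split_ifs with h1 h2
    · simp [h1]
    · simp only [h1, ne_eq, not_false_eq_true, true_and]; omega
    · simp [h1]
  have hR : IsRDF G f' := by
    refine ⟨fun w => ?_, fun w hw => ?_⟩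
    · have := hf.1.1 w
      simp only [hf']
      split_ifs <;> omega
    · by_cases h : w = u
      · subst h
        exact ⟨v, huv, (htwo v).2 ⟨huv.ne', hv⟩⟩
      · have hw0 : f w = 0 := by have := hge w h; omega
        obtain ⟨z, hz, hz2⟩ := hf.1.2 w hw0
        refine ⟨z, hz, (htwo z).2 ⟨?_, hz2⟩⟩
        rintro rfl
        have hab : w = a ∨ w = b := by
          rcases hN w hz.symm with rfl | h'
          · omega
          · exact h'
        simp only [hf', h, if_false, hab, if_true] at hw
        omega
  have hle : weight f' ≤ weight f := by
    simp only [weight, finsum_eq_sum_of_fintype]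
    have hpt : ∀ w ∈ Finset.univ, f' w + (if w = u then 2 else 0) ≤
        f w + ((if w = a then 1 else 0) + (if w = b then 1 else 0)) := by
      intro w _
      by_cases h1 : w = u
      · simp [hf', h1, hu]
      · simp only [hf', if_neg h1]
        split_ifs <;> first | omega | tauto
    have := Finset.sum_le_sum hpt
    simp only [Finset.sum_add_distrib, Finset.sum_ite_eq', Finset.mem_univ, if_true] at this
    omega
  have hγ : IsGammaRFun G f' := ⟨hR, le_antisymm (hle.trans hf.2.le) (hf.2 ▸ hf.weight_le hR)⟩
  refine absurd (hmin f' hγ) (not_le.mpr (Set.ncard_lt_ncard ?_ (Set.toFinite _)))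
  refine ⟨fun w hw => ((htwo w).1 hw).2, fun hsub => ?_⟩
  exact ((htwo u).1 (hsub hu)).1 rfl

end Minimality

/-! ### Sequences of columns -/

/-- Twice the excess `r_f` of a vertex of value `x` with neighbours of values `y`, `z`, `w`. The
truncated subtraction is harmless since a vertex of value `0` has a neighbour of value `2`. -/
def exc (x y z w : ℕ) : ℕ :=
  bif x == 2 then 0 else bif x == 1 then 1 else
    (bif y == 2 then 1 else 0) + (bif z == 2 then 1 else 0) + (bif w == 2 then 1 else 0) - 1

/-- A vertex of value `x` with neighbours of values `y`, `z`, `w` is Roman dominated. -/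
def domd (x y z w : ℕ) : Bool := !(x == 0) || y == 2 || z == 2 || w == 2

/-- The two ends of an edge may have the values `x` and `y`. -/
def edgeOK (x y : ℕ) : Bool := !(x == 2 && !(y == 0) || y == 2 && !(x == 0))

/-- The possible columns `(f(v_j), f(u_j))`. -/
def cols : List (ℕ × ℕ) := [(0, 0), (0, 1), (0, 2), (1, 0), (1, 1), (2, 0)]

/-- Twice the excess of the middle column of five consecutive columns. -/
def colExc (p q r s t : ℕ × ℕ) : ℕ :=
  exc r.1 q.1 s.1 r.2 + exc r.2 p.2 t.2 r.1

/-- The column `t` may follow `p`, `q`, `r`, `s`: the edges ending in `t` are allowed and the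
vertices of the column `r` are dominated. -/
def colOK (p q r s t : ℕ × ℕ) : Bool :=
  edgeOK s.1 t.1 && edgeOK r.2 t.2 && domd r.1 q.1 s.1 r.2 && domd r.2 p.2 t.2 r.1

/-- Every continuation of the columns `p`, `q`, `r`, `s` by `m` further columns, for which the `m`
columns from `r` on have doubled excess at most `b` in total, ends in four columns satisfying
`C`. -/
def Forced : ℕ → ℕ → (ℕ × ℕ → ℕ × ℕ → ℕ × ℕ → ℕ × ℕ → Bool) →
    ℕ × ℕ → ℕ × ℕ → ℕ × ℕ → ℕ × ℕ → Bool
  | 0, _, C, p, q, r, s => C p q r s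
  | m + 1, b, C, p, q, r, s => cols.all fun t =>
      !(colOK p q r s t) ||
        -- matching on `b + 1 - colExc` makes the kernel evaluate the remaining budget at once
        match b + 1 - colExc p q r s t with
        | 0 => true
        | b' + 1 => Forced m b' C q r s t

/-- A sequence of columns satisfying the constraints coming from a `γ_R`-function with
minimum `V₂`. -/
structure Admissible (a : ℕ → ℕ × ℕ) : Prop where
  mem : ∀ j, a j ∈ cols
  ok : ∀ j, colOK (a j) (a (j + 1)) (a (j + 2)) (a (j + 3)) (a (j + 4)) = true

/-- Twice the excess of the column `j + 2`. -/
def seqExc (a : ℕ → ℕ × ℕ) (j : ℕ) : ℕ :=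
  colExc (a j) (a (j + 1)) (a (j + 2)) (a (j + 3)) (a (j + 4))

lemma Forced.sound {a : ℕ → ℕ × ℕ} (ha : Admissible a)
    {C : ℕ × ℕ → ℕ × ℕ → ℕ × ℕ → ℕ × ℕ → Bool} (m b k : ℕ)
    (h : Forced m b C (a k) (a (k + 1)) (a (k + 2)) (a (k + 3)) = true)
    (hb : ∑ t ∈ Finset.range m, seqExc a (k + t) ≤ b) :
    C (a (k + m)) (a (k + m + 1)) (a (k + m + 2)) (a (k + m + 3)) = true := by
  induction m generalizing b k with
  | zero => exact h
  | succ m ih =>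
    rw [Finset.sum_range_succ'] at hb
    simp only [Forced, List.all_eq_true] at h
    have h' := h (a (k + 4)) (ha.mem _)
    rw [ha.ok k] at h'
    have he : colExc (a k) (a (k + 1)) (a (k + 2)) (a (k + 3)) (a (k + 4)) = seqExc a k := rfl
    rw [he] at h'
    rw [add_zero] at hb
    obtain ⟨b', hb'⟩ : ∃ b', b + 1 - seqExc a k = b' + 1 :=
      ⟨b - seqExc a k, by omega⟩
    rw [hb'] at h'
    have hs : ∑ t ∈ Finset.range m, seqExc a (k + (t + 1)) =
        ∑ t ∈ Finset.range m, seqExc a (k + 1 + t) :=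
      Finset.sum_congr rfl fun t _ => by congr 1; omega
    have := ih b' (k + 1) (by simpa using h') (by omega)
    have hk : k + 1 + m = k + (m + 1) := by omega
    rwa [hk] at this

/-- The possible last four columns read when a block of seven columns has excess at most `1/2`. -/
def endings : List ((ℕ × ℕ) × (ℕ × ℕ) × (ℕ × ℕ) × (ℕ × ℕ)) :=
  [((2, 0), (0, 0), (1, 0), (0, 2)), ((0, 2), (0, 0), (2, 0), (0, 1)),
   ((2, 0), (0, 0), (1, 1), (0, 2)), ((2, 0), (0, 0), (0, 0), (0, 2)),
   ((0, 2), (0, 0), (2, 0), (0, 0)), ((2, 0), (0, 0), (0, 1), (0, 2))]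

lemma forced_endings : (cols.all fun p => cols.all fun q => cols.all fun r => cols.all fun s =>
    Forced 7 1 (fun p' q' r' s' => endings.any fun e => e == (p', q', r', s')) p q r s) = true := by
  decide +kernel

lemma endings_forced : (endings.all fun e =>
    Forced 7 3 (Forced 7 1 fun _ _ _ _ => false) e.1 e.2.1 e.2.2.1 e.2.2.2) = true := by
  decide +kernel

lemma not_periodic_five :
    (cols.all fun p => cols.all fun q => cols.all fun r => cols.all fun s =>
      Forced 5 1 (fun p' q' r' s' => !((p', q', r', s') == (p, q, r, s))) p q r s) = true := by
  decide +kernel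

lemma not_periodic_six :
    (cols.all fun p => cols.all fun q => cols.all fun r => cols.all fun s =>
      Forced 6 1 (fun p' q' r' s' => !((p', q', r', s') == (p, q, r, s))) p q r s) = true := by
  decide +kernel

-- keeps unification from evaluating the search
attribute [irreducible] Forced

/-- The combinatorial core: between two blocks of doubled excess at most `1`, a block has doubled
excess at least `4`. -/
lemma Admissible.middle {a : ℕ → ℕ × ℕ} (ha : Admissible a)
    (h0 : ∑ t ∈ Finset.range 7, seqExc a t ≤ 1)
    (h2 : ∑ t ∈ Finset.range 7, seqExc a (14 + t) ≤ 1) :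
    4 ≤ ∑ t ∈ Finset.range 7, seqExc a (7 + t) := by
  by_contra! h1
  have hF := forced_endings
  simp only [List.all_eq_true] at hF
  have hE := Forced.sound ha 7 1 0 (hF _ (ha.mem 0) _ (ha.mem 1) _ (ha.mem 2) _ (ha.mem 3))
    (by simpa using h0)
  simp only [List.any_eq_true, beq_iff_eq] at hE
  obtain ⟨e, he, rfl⟩ := hE
  have hF' := endings_forced
  simp only [List.all_eq_true] at hF'
  have hM := Forced.sound ha 7 3 7 (hF' _ he) (by omega)
  have := Forced.sound ha 7 1 14 hM h2
  simp at this

lemma Admissible.not_periodic {a : ℕ → ℕ × ℕ} (ha : Admissible a) {n : ℕ} (hn : n = 5 ∨ n = 6)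
    (hper : ∀ j, a (j + n) = a j) : ¬ ∑ t ∈ Finset.range n, seqExc a t ≤ 1 := by
  intro h
  have key : Forced n 1 (fun p' q' r' s' => !((p', q', r', s') == (a 0, a 1, a 2, a 3)))
      (a 0) (a 1) (a 2) (a 3) = true := by
    rcases hn with rfl | rfl
    · have hF := not_periodic_five
      simp only [List.all_eq_true] at hF
      exact hF _ (ha.mem 0) _ (ha.mem 1) _ (ha.mem 2) _ (ha.mem 3)
    · have hF := not_periodic_six
      simp only [List.all_eq_true] at hF
      exact hF _ (ha.mem 0) _ (ha.mem 1) _ (ha.mem 2) _ (ha.mem 3)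
  have := Forced.sound ha n 1 0 key (by simpa using h)
  have e1 : a (0 + n + 1) = a 1 := by rw [← hper 1]; congr 1; omega
  have e2 : a (0 + n + 2) = a 2 := by rw [← hper 2]; congr 1; omega
  have e3 : a (0 + n + 3) = a 3 := by rw [← hper 3]; congr 1; omega
  rw [hper, e1, e2, e3] at this
  simp at this

/-! ### The generalized Petersen graph `P(n,2)` -/

lemma petersen_adj_inl {n : ℕ} (hn : 5 ≤ n) (j : ZMod n) (w : ZMod n ⊕ ZMod n) :
    (petersen n 2).Adj (Sum.inl j) w ↔
      w = Sum.inl (j - 1) ∨ w = Sum.inl (j + 1) ∨ w = Sum.inr j := by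
  have h1 : (1 : ZMod n) ≠ 0 := by
    have : Fact (1 < n) := ⟨by omega⟩
    exact one_ne_zero
  rcases w with k | k <;> simp only [petersen, SimpleGraph.fromRel_adj]
  · simp only [ne_eq, Sum.inl.injEq, reduceCtorEq, or_false]
    constructor
    · rintro ⟨-, h | h⟩
      · exact Or.inr h
      · left; rw [h]; ring
    · rintro (h | h)
      · subst h
        exact ⟨fun h => h1 (by linear_combination h), Or.inr (by ring)⟩
      · subst h
        exact ⟨fun h => h1 (by linear_combination -h), Or.inl rfl⟩
  · simp

lemma two_ne_zero_zmod {n : ℕ} (hn : 5 ≤ n) : (2 : ZMod n) ≠ 0 := by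
  intro h
  have : ((2 : ℕ) : ZMod n) = 0 := by exact_mod_cast h
  rw [ZMod.natCast_eq_zero_iff] at this
  exact absurd (Nat.le_of_dvd (by norm_num) this) (by omega)

lemma four_ne_zero_zmod {n : ℕ} (hn : 5 ≤ n) : (4 : ZMod n) ≠ 0 := by
  intro h
  have : ((4 : ℕ) : ZMod n) = 0 := by exact_mod_cast h
  rw [ZMod.natCast_eq_zero_iff] at this
  exact absurd (Nat.le_of_dvd (by norm_num) this) (by omega)

lemma petersen_adj_inr {n : ℕ} (hn : 5 ≤ n) (j : ZMod n) (w : ZMod n ⊕ ZMod n) :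
    (petersen n 2).Adj (Sum.inr j) w ↔
      w = Sum.inr (j - 2) ∨ w = Sum.inr (j + 2) ∨ w = Sum.inl j := by
  have h2 := two_ne_zero_zmod hn
  rcases w with k | k <;> simp only [petersen, SimpleGraph.fromRel_adj]
  · simp [eq_comm]
  · simp only [ne_eq, Sum.inr.injEq, reduceCtorEq, or_false, Nat.cast_ofNat]
    constructor
    · rintro ⟨-, h | h⟩
      · exact Or.inr h
      · left; rw [h]; ring
    · rintro (h | h)
      · subst h
        exact ⟨fun h => h2 (by linear_combination h), Or.inr (by ring)⟩
      · subst h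
        exact ⟨fun h => h2 (by linear_combination -h), Or.inl rfl⟩

lemma ncard_inter_two {V : Type*} {f : V → ℕ} {N : Set V} {a b c : V}
    (hN : ∀ w, w ∈ N ↔ w = a ∨ w = b ∨ w = c) (hab : a ≠ b) (hac : a ≠ c) (hbc : b ≠ c) :
    (N ∩ {u | f u = 2}).ncard =
      (if f a = 2 then 1 else 0) + (if f b = 2 then 1 else 0) + (if f c = 2 then 1 else 0) := by
  classical
  have : N ∩ {u | f u = 2} = ↑(({a, b, c} : Finset V).filter fun u => f u = 2) := by
    ext w
    simp [hN]
  rw [this, Set.ncard_coe_finset, Finset.card_filter, Finset.sum_insert (by simp [hab, hac]),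
    Finset.sum_insert (by simp [hbc]), Finset.sum_singleton, add_assoc]

lemma gf_sub_half {n : ℕ} {f : ZMod n ⊕ ZMod n → ℕ} (hf : IsRDF (petersen n 2) f)
    {w a b c : ZMod n ⊕ ZMod n}
    (hN : ∀ z, (petersen n 2).Adj w z ↔ z = a ∨ z = b ∨ z = c)
    (hab : a ≠ b) (hac : a ≠ c) (hbc : b ≠ c) :
    gf n f w - 1 / 2 = (exc (f w) (f a) (f b) (f c) : ℚ) / 2 := by
  have hle := hf.1 w
  rcases (by omega : f w = 2 ∨ f w = 1 ∨ f w = 0) with h | h | h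
  · simp [gf, exc, h]
  · simp [gf, exc, h]; norm_num
  · have hc := ncard_inter_two (f := f) (N := (petersen n 2).neighborSet w)
      (fun z => by rw [SimpleGraph.mem_neighborSet, hN]) hab hac hbc
    have hd : f a = 2 ∨ f b = 2 ∨ f c = 2 := by
      obtain ⟨z, hz, hz2⟩ := hf.2 w h
      rcases (hN z).1 hz with rfl | rfl | rfl <;> simp [hz2]
    simp only [gf, h, hc, exc, Bool.cond_eq_ite, beq_iff_eq]
    split_ifs <;> first | omega | norm_num

lemma domd_of_isRDF {V : Type*} {G : SimpleGraph V} {f : V → ℕ} (hf : IsRDF G f)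
    {w a b c : V} (hN : ∀ z, G.Adj w z ↔ z = a ∨ z = b ∨ z = c) :
    domd (f w) (f a) (f b) (f c) = true := by
  by_cases h : f w = 0
  · obtain ⟨z, hz, hz2⟩ := hf.2 w h
    rcases (hN z).1 hz with rfl | rfl | rfl <;> simp [domd, hz2]
  · simp [domd, h]

lemma edgeOK_of_isGammaRFun {n : ℕ} (hn : 5 ≤ n) {f : ZMod n ⊕ ZMod n → ℕ}
    (hf : IsGammaRFun (petersen n 2) f) (hmin : MinV2 n f) {u v : ZMod n ⊕ ZMod n}
    (huv : (petersen n 2).Adj u v) : edgeOK (f u) (f v) = true := by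
  have : NeZero n := ⟨by omega⟩
  have h22 : f u = 2 → f v = 2 → False := by
    intro hu hv
    obtain ⟨a, b, hab⟩ : ∃ a b, ∀ w, (petersen n 2).Adj u w → w = v ∨ w = a ∨ w = b := by
      have : ∃ a b c, ∀ w, (petersen n 2).Adj u w ↔ w = a ∨ w = b ∨ w = c := by
        rcases u with j | j
        · exact ⟨_, _, _, petersen_adj_inl hn j⟩
        · exact ⟨_, _, _, petersen_adj_inr hn j⟩
      obtain ⟨a, b, c, h⟩ := this
      rcases (h v).1 huv with rfl | rfl | rfl
      · exact ⟨b, c, fun w hw => (h w).1 hw⟩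
      · exact ⟨a, c, fun w hw => by have := (h w).1 hw; tauto⟩
      · exact ⟨a, b, fun w hw => by have := (h w).1 hw; tauto⟩
    exact hf.not_adj_two_two hmin huv hab hu hv
  have h21 : f u = 2 → f v = 1 → False := hf.not_adj_two_one huv
  have h12 : f v = 2 → f u = 1 → False := hf.not_adj_two_one huv.symm
  have hu := hf.1.1 u
  have hv := hf.1.1 v
  rcases (by omega : f u = 2 ∨ f u = 1 ∨ f u = 0) with h | h | h <;>
    rcases (by omega : f v = 2 ∨ f v = 1 ∨ f v = 0) with h' | h' | h' <;>
    simp_all [edgeOK]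

/-! ### Reading the columns along the universal cover -/

/-- The columns of `f`, read from the index `c` onwards along the universal cover `ℕ → ZMod n`. -/
def colSeq (n : ℕ) (f : ZMod n ⊕ ZMod n → ℕ) (c : ZMod n) (j : ℕ) : ℕ × ℕ :=
  (f (Sum.inl (c + j)), f (Sum.inr (c + j)))

lemma colSeq_admissible {n : ℕ} (hn : 5 ≤ n) {f : ZMod n ⊕ ZMod n → ℕ}
    (hf : IsGammaRFun (petersen n 2) f) (hmin : MinV2 n f) (c : ZMod n) :
    Admissible (colSeq n f c) := by
  refine ⟨fun j => ?_, fun j => ?_⟩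
  · have hE := edgeOK_of_isGammaRFun hn hf hmin
      ((petersen_adj_inl hn (c + j) (Sum.inr (c + j))).2 (by simp))
    have h1 := hf.1.1 (Sum.inl (c + j))
    have h2 := hf.1.1 (Sum.inr (c + j))
    simp only [colSeq]
    revert hE h1 h2
    generalize f (Sum.inl (c + j)) = x
    generalize f (Sum.inr (c + j)) = y
    intro hE h1 h2
    interval_cases x <;> interval_cases y <;> revert hE <;> decide
  · have e1 : c + ((j + 1 : ℕ) : ZMod n) = c + ((j + 2 : ℕ) : ZMod n) - 1 := by push_cast; ring
    have e3 : c + ((j + 3 : ℕ) : ZMod n) = c + ((j + 2 : ℕ) : ZMod n) + 1 := by push_cast; ring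
    have e0 : c + (j : ZMod n) = c + ((j + 2 : ℕ) : ZMod n) - 2 := by push_cast; ring
    have e4 : c + ((j + 4 : ℕ) : ZMod n) = c + ((j + 2 : ℕ) : ZMod n) + 2 := by push_cast; ring
    have e34 : c + ((j + 4 : ℕ) : ZMod n) = c + ((j + 3 : ℕ) : ZMod n) + 1 := by push_cast; ring
    simp only [colOK, colSeq, Bool.and_eq_true]
    refine ⟨⟨⟨?_, ?_⟩, ?_⟩, ?_⟩
    · rw [e34]
      exact edgeOK_of_isGammaRFun hn hf hmin ((petersen_adj_inl hn _ _).2 (by simp))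
    · rw [e4]
      exact edgeOK_of_isGammaRFun hn hf hmin ((petersen_adj_inr hn _ _).2 (by simp))
    · rw [e1, e3]
      exact domd_of_isRDF hf.1 (petersen_adj_inl hn _)
    · rw [e0, e4]
      exact domd_of_isRDF hf.1 (petersen_adj_inr hn _)

lemma seqExc_colSeq {n : ℕ} (hn : 5 ≤ n) {f : ZMod n ⊕ ZMod n → ℕ}
    (hf : IsRDF (petersen n 2) f) (c : ZMod n) (j : ℕ) :
    (gf n f (Sum.inl (c + 2 + j)) - 1 / 2) + (gf n f (Sum.inr (c + 2 + j)) - 1 / 2) =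
      (seqExc (colSeq n f c) j : ℚ) / 2 := by
  have h2 := two_ne_zero_zmod hn
  have h4 := four_ne_zero_zmod hn
  rw [gf_sub_half hf (petersen_adj_inl hn _) (by
      rw [ne_eq, Sum.inl.injEq]; exact fun h => h2 (by linear_combination -h)) (by simp) (by simp),
    gf_sub_half hf (petersen_adj_inr hn _) (by
      rw [ne_eq, Sum.inr.injEq]; exact fun h => h4 (by linear_combination -h)) (by simp) (by simp)]
  have e0 : c + 2 + (j : ZMod n) - 2 = c + j := by ring
  have e1 : c + 2 + (j : ZMod n) - 1 = c + ((j + 1 : ℕ) : ZMod n) := by push_cast; ring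
  have e2 : c + 2 + (j : ZMod n) = c + ((j + 2 : ℕ) : ZMod n) := by push_cast; ring
  have e3 : c + 2 + (j : ZMod n) + 1 = c + ((j + 3 : ℕ) : ZMod n) := by push_cast; ring
  have e4 : c + 2 + (j : ZMod n) + 2 = c + ((j + 4 : ℕ) : ZMod n) := by push_cast; ring
  rw [e0, e1, e3, e4, e2]
  simp only [seqExc, colExc, colSeq]
  push_cast
  ring

/-- On a block of at most `n` columns the indices are distinct modulo `n`, so `r_f` is half the sum
of the excesses of its columns. -/
lemma rfSum_Vblock {n : ℕ} (hn : 5 ≤ n) {f : ZMod n ⊕ ZMod n → ℕ}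
    (hf : IsRDF (petersen n 2) f) (c : ZMod n) (i : ℤ) (hi : (i : ZMod n) = c + 2)
    {m : ℕ} (hm : m ≤ n) :
    rfSum n f (Vblock n i m) = ((∑ t ∈ Finset.range m, seqExc (colSeq n f c) t : ℕ) : ℚ) / 2 := by
  classical
  have hinj : Set.InjOn (fun t : ℕ => c + 2 + (t : ZMod n)) (Finset.range m : Set ℕ) := by
    intro s hs t ht h
    simp only [Finset.coe_range, Set.mem_Iio] at hs ht
    have h' : (s : ZMod n) = t := add_left_cancel h
    rw [ZMod.natCast_eq_natCast_iff', Nat.mod_eq_of_lt (by omega), Nat.mod_eq_of_lt (by omega)] at h'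
    exact h'
  have hset : Vblock n i m =
      ↑((Finset.range m).image (fun t : ℕ => (Sum.inl (c + 2 + (t : ZMod n)) : ZMod n ⊕ ZMod n)) ∪
        (Finset.range m).image (fun t : ℕ => (Sum.inr (c + 2 + (t : ZMod n)) : ZMod n ⊕ ZMod n))) := by
    ext w
    simp only [Vblock, Set.mem_ofPred_eq, Finset.coe_union, Finset.coe_image, Finset.coe_range,
      Set.mem_union, Set.mem_image, Set.mem_Iio]
    constructor
    · rintro ⟨j, h1, h2, h3⟩
      obtain ⟨t, ht⟩ := Int.eq_ofNat_of_zero_le (sub_nonneg.2 h1)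
      have hj : (j : ZMod n) = c + 2 + (t : ZMod n) := by
        rw [← hi, show j = i + (t : ℤ) by omega]; push_cast; ring
      rw [hj] at h3
      rcases h3 with h3 | h3
      · exact Or.inl ⟨t, by omega, h3.symm⟩
      · exact Or.inr ⟨t, by omega, h3.symm⟩
    · rintro (⟨t, ht, rfl⟩ | ⟨t, ht, rfl⟩)
      · exact ⟨i + t, by omega, by omega, by left; push_cast; rw [hi]⟩
      · exact ⟨i + t, by omega, by omega, by right; push_cast; rw [hi]⟩
  rw [rfSum, hset, finsum_mem_coe_finset, Finset.sum_union, Finset.sum_image, Finset.sum_image,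
    ← Finset.sum_add_distrib, Nat.cast_sum, Finset.sum_div]
  · exact Finset.sum_congr rfl fun t _ => seqExc_colSeq hn hf c t
  · exact fun s hs t ht h => hinj hs ht (Sum.inr.inj h)
  · exact fun s hs t ht h => hinj hs ht (Sum.inl.inj h)
  · rw [Finset.disjoint_left]
    intro w h1 h2
    simp only [Finset.mem_image] at h1 h2
    obtain ⟨s, -, rfl⟩ := h1
    obtain ⟨t, -, h⟩ := h2
    exact Sum.inr_ne_inl h

/-- A block of at least `n` columns is the whole graph. -/
lemma Vblock_of_le {n : ℕ} (hn : 0 < n) (i : ℤ) {m : ℕ} (hm : n ≤ m) :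
    Vblock n i m = Vblock n i n := by
  ext w
  simp only [Vblock, Set.mem_ofPred_eq]
  constructor
  · rintro ⟨j, h1, h2, h3⟩
    have hpos : (0 : ℤ) < n := by exact_mod_cast hn
    refine ⟨i + (j - i) % n, ?_, ?_, ?_⟩
    · have := Int.emod_nonneg (j - i) hpos.ne'
      omega
    · have := Int.emod_lt_of_pos (j - i) hpos
      omega
    · have : ((i + (j - i) % n : ℤ) : ZMod n) = j := by
        rw [Int.cast_add, ZMod.intCast_mod]
        push_cast
        ring
      rwa [this]
  · rintro ⟨j, h1, h2, h3⟩
    exact ⟨j, h1, by omega, h3⟩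

/-- If `r_f(V'(i−7,7)) = 1/2` and `r_f(V'(i+7,7)) = 1/2`, then
`r_f(V'(i,7)) ≥ 2`. -/
theorem middle_block_of_two_low_weight_blocks (n : ℕ) (hn : 5 ≤ n)
    (f : ZMod n ⊕ ZMod n → ℕ) (hf : IsGammaRFun (petersen n 2) f)
    (hmin : MinV2 n f) (i : ℤ)
    (h1 : rfSum n f (Vblock n (i - 7) 7) = 1/2)
    (h2 : rfSum n f (Vblock n (i + 7) 7) = 1/2) :
    2 ≤ rfSum n f (Vblock n i 7) := by
  -- two columns of context precede the first block
  have ha := colSeq_admissible hn hf hmin ((i : ZMod n) - 9)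
  rcases Nat.lt_or_ge n 7 with h7 | h7
  · exfalso
    rw [Vblock_of_le (by omega) _ h7.le,
      rfSum_Vblock hn hf.1 ((i : ZMod n) - 9) _ (by push_cast; ring) le_rfl] at h1
    refine ha.not_periodic (n := n) (by omega) (fun j => by simp [colSeq]) ?_
    have : ((∑ t ∈ Finset.range n, seqExc (colSeq n f ((i : ZMod n) - 9)) t : ℕ) : ℚ) = 1 := by
      linarith
    exact_mod_cast this.le
  · -- the sequences starting at the three blocks are shifts of one another
    have hshift : ∀ k t : ℕ, seqExc (colSeq n f ((i : ZMod n) - 9 + k)) t =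
        seqExc (colSeq n f ((i : ZMod n) - 9)) (k + t) := by
      intro k t
      have hc : ∀ j, colSeq n f ((i : ZMod n) - 9 + k) j = colSeq n f ((i : ZMod n) - 9) (k + j) := by
        intro j
        simp only [colSeq, Nat.cast_add, add_assoc]
      simp only [seqExc, hc, add_assoc]
    rw [rfSum_Vblock hn hf.1 ((i : ZMod n) - 9) _ (by push_cast; ring) h7] at h1
    rw [rfSum_Vblock hn hf.1 ((i : ZMod n) - 9 + (14 : ℕ)) _ (by push_cast; ring) h7] at h2
    rw [rfSum_Vblock hn hf.1 ((i : ZMod n) - 9 + (7 : ℕ)) _ (by push_cast; ring) h7]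
    simp only [hshift] at h2 ⊢
    have h1' : ((∑ t ∈ Finset.range 7, seqExc (colSeq n f ((i : ZMod n) - 9)) t : ℕ) : ℚ) = 1 := by
      linarith
    have h2' : ((∑ t ∈ Finset.range 7, seqExc (colSeq n f ((i : ZMod n) - 9)) (14 + t) : ℕ) : ℚ)
        = 1 := by linarith
    have hmid := ha.middle (by exact_mod_cast h1'.le) (by exact_mod_cast h2'.le)
    have : (4 : ℚ) ≤
        ((∑ t ∈ Finset.range 7, seqExc (colSeq n f ((i : ZMod n) - 9)) (7 + t) : ℕ) : ℚ) := by
      exact_mod_cast hmid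
    linarith
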